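/- arXiv:2210.12470 — 2 statements merged into one kernel-verified Lean document; each statement's English description precedes it below -/
import Mathlib

section
/- Consider the Hedge algorithm over n actions with learning rate η > 0: it maintains weights w^1 = (1,...,1), plays the distribution x^t with x^t(j) = w^t(j)/∑_k w^t(k), and after observing the loss vector l^t updates w^{t+1}(j) = w^t(j)·exp(−η l^t(j)). Then for any sequence of loss vectors l^1,...,l^T with nonnegative entries and any fixed action i* ∈ {1,...,n}, the cumulative expected loss satisfies ∑_{t=1}^T ⟨x^t, l^t⟩ − ∑_{t=1}^T l^t(i*) ≤ (ln n)/η + η ∑_{t=1}^T ⟨x^t, (l^t)²⟩, where (l^t)² denotes the vector of squared losses (l^t(j))². -/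
noncomputable section

/-- Hedge weights: `w 0 j = 1`, `w (t+1) j = w t j * exp (−η · l t j)`. -/
def hedgeW {n : ℕ} (η : ℝ) (l : ℕ → Fin n → ℝ) : ℕ → Fin n → ℝ
  | 0 => fun _ => 1
  | t + 1 => fun j => hedgeW η l t j * Real.exp (-η * l t j)

/-- The distribution played by Hedge at round `t`:  `x t j = w t j / ∑ k w t k`. -/
def hedgeX {n : ℕ} (η : ℝ) (l : ℕ → Fin n → ℝ) (t : ℕ) (j : Fin n) : ℝ :=
  hedgeW η l t j / ∑ k, hedgeW η l t k

/-!
Track the total weight `Φ t = ∑ j, w t j`. One round multiplies it by the mean of `exp (-η l)` under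
the played distribution `x t`; since `exp y ≤ 1 + y + y ^ 2` for `y ≤ 1`, and `1 + z ≤ exp z`,
`log Φ` changes by at most `-η ⟨x t, l t⟩ + η ^ 2 ⟨x t, (l t)²⟩`. Summing over the rounds bounds
`log (Φ T)` from above, starting from `log (Φ 0) = log n`, while keeping only the weight of the
action `i⋆` gives `log (Φ T) ≥ -η ∑ t, l t i⋆`.
-/

theorem exp_le_one_add_add_sq {x : ℝ} (hx : x ≤ 1) : Real.exp x ≤ 1 + x + x ^ 2 := by
  rcases le_total (-1) x with hx' | hx'
  · have := (abs_le.mp (Real.abs_exp_sub_one_sub_id_le (abs_le.mpr ⟨hx', hx⟩))).2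
    linarith
  · calc Real.exp x ≤ 1 := Real.exp_le_one_iff.mpr (by linarith)
      _ ≤ 1 + x + x ^ 2 := by nlinarith

theorem sum_mul_exp_le_exp_sum_add_sum_sq {ι : Type*} {s : Finset ι} {p y : ι → ℝ}
    (hp : ∀ i ∈ s, 0 ≤ p i) (hp_sum : ∑ i ∈ s, p i = 1) (hy : ∀ i ∈ s, y i ≤ 1) :
    ∑ i ∈ s, p i * Real.exp (y i) ≤
      Real.exp (∑ i ∈ s, p i * y i + ∑ i ∈ s, p i * y i ^ 2) := by
  calc ∑ i ∈ s, p i * Real.exp (y i)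
      ≤ ∑ i ∈ s, p i * (1 + y i + y i ^ 2) := Finset.sum_le_sum fun i hi =>
        mul_le_mul_of_nonneg_left (exp_le_one_add_add_sq (hy i hi)) (hp i hi)
    _ = (∑ i ∈ s, p i * y i + ∑ i ∈ s, p i * y i ^ 2) + 1 := by
        simp only [mul_add, mul_one, Finset.sum_add_distrib, hp_sum]
        ring
    _ ≤ Real.exp (∑ i ∈ s, p i * y i + ∑ i ∈ s, p i * y i ^ 2) := Real.add_one_le_exp _

section Hedge

variable {n : ℕ} (η : ℝ) (l : ℕ → Fin n → ℝ)

/-- The Hedge potential: the total weight `∑ j, w t j`, which normalizes the distribution played at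
round `t`. -/
def hedgePotential (t : ℕ) : ℝ :=
  ∑ j, hedgeW η l t j

theorem hedgeW_succ (t : ℕ) (j : Fin n) :
    hedgeW η l (t + 1) j = hedgeW η l t j * Real.exp (-η * l t j) :=
  rfl

theorem hedgeW_eq_exp (t : ℕ) (j : Fin n) :
    hedgeW η l t j = Real.exp (-η * ∑ s ∈ Finset.range t, l s j) := by
  induction t with
  | zero => simp [hedgeW]
  | succ t ih => rw [hedgeW_succ, ih, ← Real.exp_add, Finset.sum_range_succ, mul_add]

theorem hedgeW_pos (t : ℕ) (j : Fin n) : 0 < hedgeW η l t j :=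
  hedgeW_eq_exp η l t j ▸ Real.exp_pos _

theorem hedgePotential_zero : hedgePotential η l 0 = n := by
  simp [hedgePotential, hedgeW]

theorem hedgeW_le_hedgePotential (t : ℕ) (j : Fin n) : hedgeW η l t j ≤ hedgePotential η l t :=
  Finset.single_le_sum (fun k _ => (hedgeW_pos η l t k).le) (Finset.mem_univ j)

theorem neg_mul_sum_le_log_hedgePotential (t : ℕ) (j : Fin n) :
    -η * ∑ s ∈ Finset.range t, l s j ≤ Real.log (hedgePotential η l t) := by
  rw [Real.le_log_iff_exp_le ((hedgeW_pos η l t j).trans_le (hedgeW_le_hedgePotential η l t j)),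
    ← hedgeW_eq_exp]
  exact hedgeW_le_hedgePotential η l t j

theorem hedgeX_nonneg (t : ℕ) (j : Fin n) : 0 ≤ hedgeX η l t j :=
  div_nonneg (hedgeW_pos η l t j).le (Finset.sum_nonneg fun k _ => (hedgeW_pos η l t k).le)

variable [NeZero n]

theorem hedgePotential_pos (t : ℕ) : 0 < hedgePotential η l t :=
  Finset.sum_pos (fun j _ => hedgeW_pos η l t j) Finset.univ_nonempty

theorem sum_hedgeX (t : ℕ) : ∑ j, hedgeX η l t j = 1 := by
  simp only [hedgeX, ← Finset.sum_div]
  exact div_self (hedgePotential_pos η l t).ne'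

theorem hedgePotential_succ (t : ℕ) :
    hedgePotential η l (t + 1) =
      hedgePotential η l t * ∑ j, hedgeX η l t j * Real.exp (-η * l t j) := by
  have hW (j : Fin n) : hedgePotential η l t * hedgeX η l t j = hedgeW η l t j :=
    mul_div_cancel₀ _ (hedgePotential_pos η l t).ne'
  rw [Finset.mul_sum, hedgePotential]
  exact Finset.sum_congr rfl fun j _ => by rw [hedgeW_succ, ← mul_assoc, hW]

variable {η l}

theorem log_hedgePotential_succ_sub_le {t : ℕ} (hl : ∀ j, -1 ≤ η * l t j) :
    Real.log (hedgePotential η l (t + 1)) - Real.log (hedgePotential η l t) ≤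
      -η * ∑ j, hedgeX η l t j * l t j + η ^ 2 * ∑ j, hedgeX η l t j * l t j ^ 2 := by
  have hΦ := hedgePotential_pos η l t
  have hmean : 0 < ∑ j, hedgeX η l t j * Real.exp (-η * l t j) :=
    pos_of_mul_pos_right (hedgePotential_succ η l t ▸ hedgePotential_pos η l (t + 1)) hΦ.le
  have hlin : ∑ j, hedgeX η l t j * (-η * l t j) = -η * ∑ j, hedgeX η l t j * l t j := by
    rw [Finset.mul_sum]
    exact Finset.sum_congr rfl fun j _ => by ring
  have hsq : ∑ j, hedgeX η l t j * (-η * l t j) ^ 2 =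
      η ^ 2 * ∑ j, hedgeX η l t j * l t j ^ 2 := by
    rw [Finset.mul_sum]
    exact Finset.sum_congr rfl fun j _ => by ring
  rw [hedgePotential_succ, Real.log_mul hΦ.ne' hmean.ne', add_sub_cancel_left,
    Real.log_le_iff_le_exp hmean, ← hlin, ← hsq]
  exact sum_mul_exp_le_exp_sum_add_sum_sq (fun j _ => hedgeX_nonneg η l t j) (sum_hedgeX η l t)
    fun j _ => by linarith [hl j]

theorem log_hedgePotential_le {T : ℕ} (hl : ∀ t < T, ∀ j, -1 ≤ η * l t j) :
    Real.log (hedgePotential η l T) ≤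
      Real.log n - η * ∑ t ∈ Finset.range T, ∑ j, hedgeX η l t j * l t j +
        η ^ 2 * ∑ t ∈ Finset.range T, ∑ j, hedgeX η l t j * l t j ^ 2 := by
  have hsum := Finset.sum_le_sum fun t ht =>
    log_hedgePotential_succ_sub_le (hl t (Finset.mem_range.mp ht))
  rw [Finset.sum_range_sub fun t => Real.log (hedgePotential η l t), hedgePotential_zero,
    Finset.sum_add_distrib, ← Finset.mul_sum, ← Finset.mul_sum] at hsum
  linarith

end Hedge

theorem stmt0_general {n : ℕ} (T : ℕ) (η : ℝ) (hη : 0 < η) (l : ℕ → Fin n → ℝ)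
    (hl : ∀ t < T, ∀ j, -1 ≤ η * l t j) (istar : Fin n) :
    ∑ t ∈ Finset.range T, (∑ j, hedgeX η l t j * l t j) - ∑ t ∈ Finset.range T, l t istar ≤
      Real.log n / η + η * ∑ t ∈ Finset.range T, ∑ j, hedgeX η l t j * (l t j) ^ 2 := by
  have : NeZero n := ⟨istar.pos.ne'⟩
  have hlower := neg_mul_sum_le_log_hedgePotential η l T istar
  have hupper := log_hedgePotential_le hl
  rw [← sub_le_iff_le_add, le_div_iff₀ hη]
  linarith

/-- regret bound for Hedge.  For any sequence of nonnegative loss vectors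
`l^1, ..., l^T` and any fixed action `i⋆`,
`∑_t ⟨x^t, l^t⟩ − ∑_t l^t(i⋆) ≤ (ln n)/η + η ∑_t ⟨x^t, (l^t)²⟩`. -/
theorem stmt0 {n : ℕ} (T : ℕ) (η : ℝ) (hη : 0 < η) (l : ℕ → Fin n → ℝ)
    (hl : ∀ t j, 0 ≤ l t j) (istar : Fin n) :
    ∑ t ∈ Finset.range T, (∑ j, hedgeX η l t j * l t j) - ∑ t ∈ Finset.range T, l t istar ≤
      Real.log n / η + η * ∑ t ∈ Finset.range T, ∑ j, hedgeX η l t j * (l t j) ^ 2 := by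
  exact stmt0_general T η hη l (fun t _ j => by linarith [mul_nonneg hη.le (hl t j)]) istar

end
end

section
/- For every ε > 0, every finite general-sum MLSF game (with a unique follower best response Br(a) for every joint leader action a) admits an ε-CSE, i.e., there exists a probability distribution χ over the joint leader action set A such that for every leader i and every swap function s : A_i → A_i, E_{a∼χ}[l_i(a, Br(a))] ≤ E_{a∼χ}[l_i(s(a_i), a_{-i}, Br(s(a_i), a_{-i}))] + ε. -/
open Finset

/-! Once `Br` is fixed, the leaders play an ordinary finite game with costs `l i a (Br a)`, and a
CSE is a correlated equilibrium of it, given by swap functions. An exact one exists by the argument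
of Hart and Schmeidler. By separation from the nonnegative orthant, it is enough to find, for every
nonnegative weighting `w` of the pairs `(i, s)`, a distribution whose `w`-average gain from
deviating is at most zero. For each player `i` the weights `w (i, ·)` define a Markov chain on the
actions of `i` (up to scaling); if every player independently draws from a stationary distribution
of their own chain, the `w`-average deviation of each player leaves the law of the play unchanged,
so the average gain is exactly zero. -/

open Function Matrix

theorem exists_mem_nonneg_of_forall_exists_dotProduct_nonneg {κ : Type*} [Fintype κ]
    {K : Set (κ → ℝ)} (hK : Convex ℝ K) (hKc : IsCompact K)
    (h : ∀ w : κ → ℝ, 0 ≤ w → ∃ y ∈ K, 0 ≤ w ⬝ᵥ y) : ∃ y ∈ K, 0 ≤ y := by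
  classical
  by_contra! hcon
  have hdisj : Disjoint K (ProperCone.positive ℝ (κ → ℝ)) :=
    Set.disjoint_left.2 fun y hy hy0 => hcon y hy hy0
  obtain ⟨φ, hφ_nonneg, hφ_neg⟩ :=
    (ProperCone.positive ℝ (κ → ℝ)).hyperplane_separation hK hKc hdisj
  let w : κ → ℝ := (dotProductEquiv ℝ κ).symm φ
  have hw : ∀ y, w ⬝ᵥ y = φ y := fun y =>
    congrArg (fun ψ : Module.Dual ℝ (κ → ℝ) => ψ y) ((dotProductEquiv ℝ κ).apply_symm_apply φ)
  have hw_nonneg : 0 ≤ w := fun k => hφ_nonneg _ (Pi.single_nonneg.2 zero_le_one)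
  obtain ⟨y, hyK, hy⟩ := h w hw_nonneg
  exact (hφ_neg y hyK).not_ge (hw y ▸ hy)

section Stationary

variable {α κ : Type*} [Fintype α] [Fintype κ]

theorem exists_ne_zero_vecMul_eq_smul {R : Type*} [CommRing R] [IsDomain R] {M : Matrix α α R}
    {r : R} {v : α → R} (hv : v ≠ 0) (h : M *ᵥ v = r • v) : ∃ u ≠ 0, u ᵥ* M = r • u := by
  classical
  have hdet : (M - r • 1).det = 0 :=
    exists_mulVec_eq_zero_iff.1 ⟨v, hv, by rw [sub_mulVec, smul_mulVec, one_mulVec, h, sub_self]⟩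
  obtain ⟨u, hu, hu0⟩ := exists_vecMul_eq_zero_iff.2 hdet
  rw [vecMul_sub, vecMul_smul, vecMul_one] at hu0
  exact ⟨u, hu, sub_eq_zero.1 hu0⟩

variable {𝕜 : Type*} [Field 𝕜] [LinearOrder 𝕜] [IsStrictOrderedRing 𝕜]

theorem abs_vecMul_eq_smul {Q : Matrix α α 𝕜} {r : 𝕜} {v : α → 𝕜} (hQ : ∀ i j, 0 ≤ Q i j)
    (hrow : Q *ᵥ 1 = r • 1) (hv : v ᵥ* Q = r • v) : |v| ᵥ* Q = r • |v| := by
  have hle : ∀ j, (r • |v|) j ≤ (|v| ᵥ* Q) j := fun j =>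
    calc r * |v j| ≤ |r * v j| := by
          rw [abs_mul]; exact mul_le_mul_of_nonneg_right (le_abs_self r) (abs_nonneg _)
      _ = |∑ i, v i * Q i j| := congrArg abs (congrFun hv j).symm
      _ ≤ ∑ i, |v i * Q i j| := abs_sum_le_sum_abs _ _
      _ = ∑ i, |v i| * Q i j := sum_congr rfl fun i _ => by rw [abs_mul, abs_of_nonneg (hQ i j)]
  -- both sides have total mass `r * ∑ j, |v j|`, so the inequalities `hle` are equalities
  have hsum : ∑ j, (r • |v|) j = ∑ j, (|v| ᵥ* Q) j := by
    rw [← dotProduct_one, ← dotProduct_one, ← dotProduct_mulVec, hrow, dotProduct_smul,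
      smul_dotProduct]
  exact funext fun j => ((sum_eq_sum_iff_of_le fun j _ => hle j).1 hsum j (mem_univ j)).symm

variable [Nonempty α]

theorem exists_mem_stdSimplex_vecMul_eq_smul {Q : Matrix α α 𝕜} {r : 𝕜} (hQ : ∀ i j, 0 ≤ Q i j)
    (hrow : Q *ᵥ 1 = r • 1) : ∃ p ∈ stdSimplex 𝕜 α, p ᵥ* Q = r • p := by
  obtain ⟨v, hv, hvQ⟩ := exists_ne_zero_vecMul_eq_smul one_ne_zero hrow
  obtain ⟨j, hj⟩ := ne_iff.1 hv
  have hpos : 0 < ∑ j, |v j| :=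
    sum_pos' (fun j _ => abs_nonneg _) ⟨j, mem_univ j, abs_pos.2 hj⟩
  refine ⟨(∑ j, |v j|)⁻¹ • |v|, ⟨fun j => ?_, ?_⟩, ?_⟩
  · exact mul_nonneg (inv_nonneg.2 hpos.le) (abs_nonneg _)
  · exact (mul_sum _ _ _).symm.trans (inv_mul_cancel₀ hpos.ne')
  · rw [smul_vecMul, abs_vecMul_eq_smul hQ hrow hvQ, smul_comm]

/-- The identity says that `p` is stationary for the chain applying the map `s k` at rate `w k`. -/
theorem exists_mem_stdSimplex_sum_mul_dotProduct_comp_eq {w : κ → 𝕜} (hw : 0 ≤ w)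
    (s : κ → α → α) : ∃ p ∈ stdSimplex 𝕜 α, ∀ g : α → 𝕜,
      ∑ k, w k * (p ⬝ᵥ (g ∘ s k)) = (∑ k, w k) * (p ⬝ᵥ g) := by
  classical
  let Q : Matrix α α 𝕜 := ∑ k, w k • (1 : Matrix α α 𝕜).submatrix (s k) id
  have hQ_mulVec : ∀ g : α → 𝕜, Q *ᵥ g = ∑ k, w k • (g ∘ s k) := fun g => by
    rw [sum_mulVec]
    refine sum_congr rfl fun k _ => ?_
    rw [smul_mulVec]
    exact congrArg (w k • ·) (funext fun j => congrFun (one_mulVec g) (s k j))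
  have hQ_nonneg : ∀ i j, 0 ≤ Q i j := fun i j => by
    simp only [Q, Matrix.sum_apply, Matrix.smul_apply, submatrix_apply, one_apply, smul_eq_mul]
    exact sum_nonneg fun k _ => mul_nonneg (hw k) (by split_ifs <;> simp)
  have hQ_row : Q *ᵥ 1 = (∑ k, w k) • 1 := by
    rw [hQ_mulVec, sum_smul]; rfl
  obtain ⟨p, hp, hpQ⟩ := exists_mem_stdSimplex_vecMul_eq_smul hQ_nonneg hQ_row
  refine ⟨p, hp, fun g => ?_⟩
  calc ∑ k, w k * (p ⬝ᵥ (g ∘ s k)) = p ⬝ᵥ (Q *ᵥ g) := by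
        simp only [hQ_mulVec, dotProduct_sum, dotProduct_smul, smul_eq_mul]
    _ = (∑ k, w k) * (p ⬝ᵥ g) := by rw [dotProduct_mulVec, hpQ, smul_dotProduct, smul_eq_mul]

end Stationary

section Deviation

variable {ι : Type*} {A : ι → Type*}

/-- The law of the play when the players draw independently, player `i` from `p i`. It is defined
for arbitrary weights `p i`. -/
def productWeight [Fintype ι] {R : Type*} [CommMonoid R] (p : ∀ i, A i → R) (a : ∀ i, A i) : R :=
  ∏ i, p i (a i)

variable [DecidableEq ι]

/-- The play in which player `i` swaps the action assigned by `a` according to `s`, all others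
following `a`. -/
def deviate (i : ι) (s : A i → A i) (a : ∀ i, A i) : ∀ i, A i :=
  update a i (s (a i))

/-- The matrix of the costs of deviating: its rows are indexed by the deviations `(i, s)`, its
columns by the plays. The correlated equilibria are the distributions which it maps into the
nonnegative orthant. -/
def deviationCost (c : ι → (∀ i, A i) → ℝ) :
    Matrix ((i : ι) × (A i → A i)) (∀ i, A i) ℝ :=
  fun d a => c d.1 (deviate d.1 d.2 a) - c d.1 a

variable [Fintype ι]

theorem productWeight_update_mul {R : Type*} [CommMonoid R] (p : ∀ i, A i → R) (i : ι)
    (a : ∀ i, A i) (x : A i) :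
    productWeight p (update a i x) * p i (a i) = productWeight p a * p i x := by
  have hupdate : productWeight p (update a i x) = p i x * ∏ k ∈ univ \ {i}, p k (a k) := by
    simp only [productWeight, apply_update p, prod_update_of_mem (mem_univ i)]
  have hself : productWeight p a = p i (a i) * ∏ k ∈ univ \ {i}, p k (a k) := by
    rw [productWeight, prod_eq_mul_prod_sdiff_singleton_of_mem (mem_univ i)]
  rw [hupdate, hself]
  ac_rfl

variable [∀ i, Fintype (A i)]

theorem productWeight_mem_stdSimplex {R : Type*} [CommSemiring R] [PartialOrder R]
    [IsOrderedRing R] {p : ∀ i, A i → R} (hp : ∀ i, p i ∈ stdSimplex R (A i)) :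
    productWeight p ∈ stdSimplex R (∀ i, A i) := by
  refine ⟨fun a => prod_nonneg fun i _ => (hp i).1 (a i), ?_⟩
  simp only [productWeight, ← Fintype.prod_sum, (hp _).2, prod_const_one]

theorem sum_sum_update_eq {M : Type*} [AddCommMonoid M] (i : ι) (F : (∀ i, A i) → A i → M) :
    ∑ a, ∑ x, F (update a i x) (a i) = ∑ a, ∑ x, F a x := by
  let e : (∀ i, A i) × A i → (∀ i, A i) × A i := fun y => (update y.1 i y.2, y.1 i)
  have he : Involutive e := fun y => by simp [e]
  rw [← Fintype.sum_prod_type', ← Fintype.sum_prod_type']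
  exact he.bijective.sum_comp fun y => F y.1 y.2

variable {R : Type*} [CommSemiring R] {p : ∀ i, A i → R} {i : ι}

theorem productWeight_dotProduct_update (hp : ∑ x, p i x = 1) (f : (∀ i, A i) → R) :
    (productWeight p ⬝ᵥ fun a => p i ⬝ᵥ fun x => f (update a i x)) = productWeight p ⬝ᵥ f :=
  calc ∑ a, productWeight p a * ∑ x, p i x * f (update a i x)
      = ∑ a, ∑ x, productWeight p (update a i x) * p i (a i) * f (update a i x) := by
        simp only [productWeight_update_mul, mul_sum, mul_assoc]
    _ = ∑ a, ∑ x, productWeight p a * p i x * f a :=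
        sum_sum_update_eq i fun a x => productWeight p a * p i x * f a
    _ = ∑ a, productWeight p a * f a := by
        simp only [← sum_mul, ← mul_sum, hp, mul_one]

theorem productWeight_dotProduct_comp_deviate (hp : ∑ x, p i x = 1) (f : (∀ i, A i) → R)
    (s : A i → A i) : productWeight p ⬝ᵥ (f ∘ deviate i s) =
      productWeight p ⬝ᵥ fun a => p i ⬝ᵥ ((fun x => f (update a i x)) ∘ s) := by
  rw [← productWeight_dotProduct_update hp]
  simp only [comp_def, deviate, update_self, update_idem]

theorem sum_mul_productWeight_dotProduct_comp_deviate {κ : Type*} [Fintype κ] {w : κ → R}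
    {s : κ → A i → A i} (hp : ∑ x, p i x = 1)
    (hstat : ∀ g : A i → R, ∑ k, w k * (p i ⬝ᵥ (g ∘ s k)) = (∑ k, w k) * (p i ⬝ᵥ g))
    (f : (∀ i, A i) → R) :
    ∑ k, w k * (productWeight p ⬝ᵥ (f ∘ deviate i (s k))) =
      (∑ k, w k) * (productWeight p ⬝ᵥ f) := by
  let P := productWeight p
  let slice (a : ∀ i, A i) (x : A i) : R := f (update a i x)
  calc ∑ k, w k * (P ⬝ᵥ (f ∘ deviate i (s k)))
      = ∑ k, w k * (P ⬝ᵥ fun a => p i ⬝ᵥ (slice a ∘ s k)) := by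
        simp only [P, slice, productWeight_dotProduct_comp_deviate hp]
    _ = P ⬝ᵥ ∑ k, w k • fun a => p i ⬝ᵥ (slice a ∘ s k) := by
        simp only [dotProduct_sum, dotProduct_smul, smul_eq_mul]
    _ = P ⬝ᵥ ((∑ k, w k) • fun a => p i ⬝ᵥ slice a) :=
        congrArg (P ⬝ᵥ ·) <| funext fun a => by
          simp only [Finset.sum_apply, Pi.smul_apply, smul_eq_mul, hstat]
    _ = (∑ k, w k) * (P ⬝ᵥ f) := by
        rw [dotProduct_smul, productWeight_dotProduct_update hp, smul_eq_mul]

end Deviation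

section CorrelatedEquilibrium

variable {ι : Type*} [Fintype ι] [DecidableEq ι] {A : ι → Type*} [∀ i, Fintype (A i)]

/-- Correlated equilibria of the finite game in which player `i` pays `c i a` at the play `a`, in
the form where a deviation of player `i` is a swap function on `A i`. -/
def IsCorrelatedEquilibrium (c : ι → (∀ i, A i) → ℝ) (χ : (∀ i, A i) → ℝ) : Prop :=
  χ ∈ stdSimplex ℝ (∀ i, A i) ∧ ∀ (i : ι) (s : A i → A i), χ ⬝ᵥ c i ≤ χ ⬝ᵥ (c i ∘ deviate i s)

theorem deviationCost_mulVec_apply (c : ι → (∀ i, A i) → ℝ) (χ : (∀ i, A i) → ℝ)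
    (d : (i : ι) × (A i → A i)) :
    (deviationCost c *ᵥ χ) d = χ ⬝ᵥ (c d.1 ∘ deviate d.1 d.2) - χ ⬝ᵥ c d.1 := by
  rw [← dotProduct_sub]
  exact dotProduct_comm _ _

theorem isCorrelatedEquilibrium_iff {c : ι → (∀ i, A i) → ℝ} {χ : (∀ i, A i) → ℝ} :
    IsCorrelatedEquilibrium c χ ↔ χ ∈ stdSimplex ℝ (∀ i, A i) ∧ 0 ≤ deviationCost c *ᵥ χ := by
  simp only [IsCorrelatedEquilibrium, Pi.le_def, Sigma.forall, deviationCost_mulVec_apply,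
    Pi.zero_apply, sub_nonneg]

variable [∀ i, Nonempty (A i)]

theorem exists_mem_stdSimplex_dotProduct_deviationCost_mulVec_eq_zero
    [∀ i, DecidableEq (A i)] (c : ι → (∀ i, A i) → ℝ) {w : (i : ι) × (A i → A i) → ℝ}
    (hw : 0 ≤ w) : ∃ χ ∈ stdSimplex ℝ (∀ i, A i), w ⬝ᵥ (deviationCost c *ᵥ χ) = 0 := by
  choose p hp hstat using fun i =>
    exists_mem_stdSimplex_sum_mul_dotProduct_comp_eq (fun s : A i → A i => hw ⟨i, s⟩) id
  refine ⟨productWeight p, productWeight_mem_stdSimplex hp, ?_⟩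
  rw [dotProduct, Fintype.sum_sigma]
  refine sum_eq_zero fun i _ => ?_
  have hinv := sum_mul_productWeight_dotProduct_comp_deviate (hp i).2 (hstat i) (c i)
  simp only [deviationCost_mulVec_apply, mul_sub, sum_sub_distrib, ← sum_mul]
  exact sub_eq_zero.2 hinv

theorem stmt3_general (c : ι → (∀ i, A i) → ℝ) : ∃ χ, IsCorrelatedEquilibrium c χ := by
  classical
  have hcompact := (isCompact_stdSimplex ℝ (∀ i, A i)).image
    (deviationCost c).mulVecLin.continuous_of_finiteDimensional
  have hconvex := (convex_stdSimplex ℝ (∀ i, A i)).linear_image (deviationCost c).mulVecLin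
  obtain ⟨_, ⟨χ, hχ, rfl⟩, hχ_nonneg⟩ :=
    exists_mem_nonneg_of_forall_exists_dotProduct_nonneg hconvex hcompact fun w hw => by
      obtain ⟨χ, hχ, hχw⟩ := exists_mem_stdSimplex_dotProduct_deviationCost_mulVec_eq_zero c hw
      exact ⟨_, Set.mem_image_of_mem _ hχ, hχw.ge⟩
  exact ⟨χ, isCorrelatedEquilibrium_iff.2 ⟨hχ, hχ_nonneg⟩⟩

end CorrelatedEquilibrium

/-- existence of ε-CSE.  For every `ε > 0`, every finite general-sum MLSF game
(`m` leaders, each with action set `Fin n`, a follower with action set `Fin nf`, leader losses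
`l i : A × B → [0,1]` where `A = Fin m → Fin n`, follower loss `lf : A × B → [0,1]`, and a unique
follower best response `Br a` for every joint leader action `a`) admits an ε-CSE: there is a
probability distribution `χ` on `A` such that for every leader `i` and every swap function
`s : Aᵢ → Aᵢ`,
`E_{a∼χ}[lᵢ(a, Br a)] ≤ E_{a∼χ}[lᵢ(s(aᵢ), a₋ᵢ, Br(s(aᵢ), a₋ᵢ))] + ε`. -/
theorem stmt3 (ε : ℝ) (hε : 0 < ε) (m n nf : ℕ) (hn : 1 ≤ n) (hnf : 1 ≤ nf)
    (l : Fin m → (Fin m → Fin n) → Fin nf → ℝ) (lf : (Fin m → Fin n) → Fin nf → ℝ)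
    (Br : (Fin m → Fin n) → Fin nf)
    (hl : ∀ i a b, l i a b ∈ Set.Icc (0 : ℝ) 1)
    (hlf : ∀ a b, lf a b ∈ Set.Icc (0 : ℝ) 1)
    (hBr : ∀ a b, b ≠ Br a → lf a (Br a) < lf a b) :
    ∃ χ : (Fin m → Fin n) → ℝ, (∀ a, 0 ≤ χ a) ∧ (∑ a, χ a = 1) ∧
      ∀ (i : Fin m) (s : Fin n → Fin n),
        ∑ a, χ a * l i a (Br a) ≤
          (∑ a, χ a *
            l i (Function.update a i (s (a i))) (Br (Function.update a i (s (a i))))) + ε := by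
  have : NeZero n := ⟨Nat.one_le_iff_ne_zero.1 hn⟩
  obtain ⟨χ, ⟨hχ_nonneg, hχ_sum⟩, hχ⟩ := stmt3_general fun i a => l i a (Br a)
  exact ⟨χ, hχ_nonneg, hχ_sum, fun i s => (hχ i s).trans (le_add_of_nonneg_right hε.le)⟩
end
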